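/- arXiv:2407.17995 — 4 statements merged into one kernel-verified Lean document; each statement's English description precedes it below -/
import Mathlib

section
/- (Statement 1) Let P be a polynomial with real coefficients of degree at most 2n, and suppose that for some real number λ the identity P(x) = P(λ − x) holds for all real x. Then there exists a polynomial Q with real coefficients of degree at most n such that P(x) = Q((x − λ/2)²) for all real x. -/
/-!
Recentring at the axis of symmetry, `R(y) = P(y + λ/2)` is an even polynomial, so its odd
coefficients vanish and `R(y) = Q(y²)`, where `Q` (the contraction of `R` by `2`) collects the even
coefficients. Since `deg R = 2 deg Q` and `deg R = deg P`, the degree bound follows.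
-/

open Polynomial in
theorem expand_contract_two_of_even (R : ℝ[X]) (h : R.comp (-X) = R) :
    expand ℝ 2 (contract 2 R) = R := by
  ext k
  rw [coeff_expand two_pos]
  split_ifs with hk
  · rw [coeff_contract two_ne_zero, Nat.div_mul_cancel hk]
  · have hodd : Odd k := by
      rwa [← Nat.not_even_iff_odd, even_iff_two_dvd]
    have hc := congrArg (fun p => coeff p k) h
    have hX : (-X : ℝ[X]) = C (-1) * X := by simp
    simp only [hX, comp_C_mul_X_coeff, hodd.neg_one_pow] at hc
    linarith

theorem symmetric_poly_reduction (n : ℕ) (lam : ℝ) (P : Polynomial ℝ)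
    (hdeg : P.natDegree ≤ 2 * n)
    (hsym : ∀ x : ℝ, P.eval x = P.eval (lam - x)) :
    ∃ Q : Polynomial ℝ, Q.natDegree ≤ n ∧
      ∀ x : ℝ, P.eval x = Q.eval ((x - lam / 2) ^ 2) := by
  set R : Polynomial ℝ := P.comp (Polynomial.X + Polynomial.C (lam / 2)) with hR
  have heven : R.comp (-Polynomial.X) = R := by
    refine Polynomial.funext fun y => ?_
    simp only [hR, Polynomial.eval_comp, Polynomial.eval_add, Polynomial.eval_neg,
      Polynomial.eval_X, Polynomial.eval_C]
    rw [hsym]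
    congr 1
    ring
  have hexp := expand_contract_two_of_even R heven
  refine ⟨Polynomial.contract 2 R, ?_, fun x => ?_⟩
  · have hd : R.natDegree = P.natDegree := by
      rw [hR, Polynomial.natDegree_comp, Polynomial.natDegree_X_add_C, mul_one]
    have hd2 := congrArg Polynomial.natDegree hexp
    rw [Polynomial.natDegree_expand] at hd2
    omega
  · rw [← Polynomial.expand_eval, hexp, hR]
    simp
end

section
/- (Example 3, first equation) For any real numbers a, b, c, d and any natural number n ≥ 1, the polynomial P(x) = (x + a)^{2n} + (x + b)^{2n} + c(x + a)(x + b) − d satisfies P(x) = P(−a − b − x) for all real x, and there exists a polynomial Q with real coefficients of degree at most n such that P(x) = Q((x + (a + b)/2)²) for all real x. -/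
/-!
Put `y = x + (a + b) / 2` and `h = (a - b) / 2`, so that `x + a = y + h` and `x + b = y - h`.
The reflection `x ↦ -a - b - x` is `y ↦ -y`; it swaps `x + a` with `-(x + b)`, and all the
exponents are even. For the second claim, the power sums `u ^ n + v ^ n` of `u = (y + h) ^ 2` and
`v = (y - h) ^ 2` are polynomials in `y ^ 2` of degree at most `n` by the Newton recurrence, since
`u + v = 2 * (y ^ 2 + h ^ 2)` and `u * v = (y ^ 2 - h ^ 2) ^ 2`. The remaining part
`c * (y ^ 2 - h ^ 2) - d` has degree at most `1 ≤ n` in `y ^ 2`.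
-/

open Polynomial in
/-- The Newton recurrence `s (n + 2) = (u + v) * s (n + 1) - u * v * s n` raises the degree in
`y ^ 2` by at most one at each step. -/
lemma exists_poly_even_power_sum (h : ℝ) (n : ℕ) :
    ∃ Q : ℝ[X], Q.natDegree ≤ n ∧
      ∀ y : ℝ, (y + h) ^ (2 * n) + (y - h) ^ (2 * n) = Q.eval (y ^ 2) := by
  induction n using Nat.twoStepInduction with
  | zero => exact ⟨C 2, by simp, fun y => by norm_num⟩
  | one =>
    refine ⟨C 2 * X + C (2 * h ^ 2), by compute_degree, fun y => ?_⟩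
    simp only [eval_add, eval_mul, eval_C, eval_X]
    ring
  | more n ih₀ ih₁ =>
    obtain ⟨Q₀, hd₀, hQ₀⟩ := ih₀
    obtain ⟨Q₁, hd₁, hQ₁⟩ := ih₁
    refine ⟨(C 2 * X + C (2 * h ^ 2)) * Q₁ - (X - C (h ^ 2)) ^ 2 * Q₀, ?_, fun y => ?_⟩
    · have e₁ : (C 2 * X + C (2 * h ^ 2) : ℝ[X]).natDegree ≤ 1 := by compute_degree
      have e₀ : ((X - C (h ^ 2)) ^ 2 : ℝ[X]).natDegree ≤ 2 := by compute_degree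
      refine (natDegree_sub_le _ _).trans (max_le ?_ ?_)
      · exact natDegree_mul_le.trans (by omega)
      · exact natDegree_mul_le.trans (by omega)
    · simp only [eval_add, eval_sub, eval_mul, eval_pow, eval_C, eval_X, ← hQ₀, ← hQ₁]
      ring

theorem example3_first (a b c d : ℝ) (n : ℕ) (hn : 1 ≤ n)
    (P : ℝ → ℝ)
    (hP : ∀ x : ℝ, P x =
      (x + a) ^ (2 * n) + (x + b) ^ (2 * n) + c * (x + a) * (x + b) - d) :
    (∀ x : ℝ, P x = P (-a - b - x)) ∧
    ∃ Q : Polynomial ℝ, Q.natDegree ≤ n ∧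
      ∀ x : ℝ, P x = Q.eval ((x + (a + b) / 2) ^ 2) := by
  constructor
  · intro x
    have ha : -a - b - x + a = -(x + b) := by ring
    have hb : -a - b - x + b = -(x + a) := by ring
    rw [hP, hP, ha, hb, (even_two_mul n).neg_pow, (even_two_mul n).neg_pow]
    ring
  · obtain ⟨Q, hd, hQ⟩ := exists_poly_even_power_sum ((a - b) / 2) n
    refine ⟨Q + (.C c * (.X - .C (((a - b) / 2) ^ 2)) - .C d), ?_, fun x => ?_⟩
    · refine Polynomial.natDegree_add_le_of_degree_le hd (le_trans ?_ hn)
      compute_degree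
    · have ha : x + (a + b) / 2 + (a - b) / 2 = x + a := by ring
      have hb : x + (a + b) / 2 - (a - b) / 2 = x + b := by ring
      simp only [Polynomial.eval_add, Polynomial.eval_sub, Polynomial.eval_mul,
        Polynomial.eval_C, Polynomial.eval_X, ← hQ, hP, ha, hb]
      ring
end

section
/- (Example 3, second equation) For any real numbers a, b, c and any natural number n ≥ 1, the polynomial P(x) = (x + a)(x + b)[(x + a)^{2n} + (x + b)^{2n}] − c satisfies P(x) = P(−a − b − x) for all real x, and there exists a polynomial Q with real coefficients of degree at most n + 1 such that P(x) = Q((x + (a + b)/2)²) for all real x. -/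
/-!
Centre the variable: with `y = x + (a + b) / 2` and `d = (a - b) / 2` we have `x + a = y + d` and
`x + b = y - d`, so `P x = (y² - d²) * ((y + d)^(2n) + (y - d)^(2n)) - c`. The power sum
`(y + d)^(2n) + (y - d)^(2n)` is a polynomial of degree at most `n` in `y²` by
`exists_poly_power_sum`; the factor `y² - d²` raises the degree by one.
-/

open Polynomial in
/-- Power sums of `u = (y + d)²` and `v = (y - d)²` obey the Newton recurrence
`s (k + 2) = (u + v) * s (k + 1) - u * v * s k`, in which `u + v = 2 (y² + d²)` and
`u * v = (y² - d²)²` have degrees one and two in `y²`. -/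
lemma exists_poly_power_sum (d : ℝ) (n : ℕ) :
    ∃ S : ℝ[X], S.natDegree ≤ n ∧
      ∀ y : ℝ, (y + d) ^ (2 * n) + (y - d) ^ (2 * n) = S.eval (y ^ 2) := by
  induction n using Nat.twoStepInduction with
  | zero => exact ⟨C 2, by simp, fun y => by simp; norm_num⟩
  | one =>
    refine ⟨C 2 * X + C (2 * d ^ 2), by compute_degree, fun y => ?_⟩
    simp only [eval_add, eval_mul, eval_C, eval_X]
    ring
  | more k ih₀ ih₁ =>
    obtain ⟨S₀, hS₀, h₀⟩ := ih₀
    obtain ⟨S₁, hS₁, h₁⟩ := ih₁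
    refine ⟨(C 2 * X + C (2 * d ^ 2)) * S₁ - (X - C (d ^ 2)) ^ 2 * S₀, ?_, fun y => ?_⟩
    · have hlin : (C 2 * X + C (2 * d ^ 2) : ℝ[X]).natDegree ≤ 1 := by compute_degree
      have hquad : ((X - C (d ^ 2)) ^ 2 : ℝ[X]).natDegree ≤ 2 := by compute_degree
      refine (natDegree_sub_le _ _).trans (max_le ?_ ?_)
      · exact (natDegree_mul_le_of_le hlin hS₁).trans (by omega)
      · exact (natDegree_mul_le_of_le hquad hS₀).trans (by omega)
    · simp only [eval_add, eval_sub, eval_mul, eval_pow, eval_C, eval_X, ← h₀, ← h₁]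
      ring

theorem example3_second (a b c : ℝ) (n : ℕ) (hn : 1 ≤ n)
    (P : ℝ → ℝ)
    (hP : ∀ x : ℝ, P x =
      (x + a) * (x + b) * ((x + a) ^ (2 * n) + (x + b) ^ (2 * n)) - c) :
    (∀ x : ℝ, P x = P (-a - b - x)) ∧
    ∃ Q : Polynomial ℝ, Q.natDegree ≤ n + 1 ∧
      ∀ x : ℝ, P x = Q.eval ((x + (a + b) / 2) ^ 2) := by
  constructor
  · intro x
    -- The reflection sends `x + a` to `-(x + b)` and `x + b` to `-(x + a)`.
    have ha : -a - b - x + a = -(x + b) := by ring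
    have hb : -a - b - x + b = -(x + a) := by ring
    rw [hP, hP, ha, hb, (even_two_mul n).neg_pow, (even_two_mul n).neg_pow]
    ring
  · obtain ⟨S, hS, h⟩ := exists_poly_power_sum ((a - b) / 2) n
    refine ⟨(.X - .C (((a - b) / 2) ^ 2)) * S - .C c, ?_, fun x => ?_⟩
    · rw [Polynomial.natDegree_sub_C]
      exact (Polynomial.natDegree_mul_le_of_le (Polynomial.natDegree_X_sub_C_le _) hS).trans
        (by omega)
    · have ha : x + (a + b) / 2 + (a - b) / 2 = x + a := by ring
      have hb : x + (a + b) / 2 - (a - b) / 2 = x + b := by ring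
      simp only [Polynomial.eval_sub, Polynomial.eval_mul, Polynomial.eval_C, Polynomial.eval_X,
        ← h, ha, hb, hP]
      ring
end

section
/- (Example 4) For any real numbers a, b, c and any natural number n, the polynomial P(x) = (x + a)^{2n+1} + (x + b)^{2n+1} + c(2x + a + b) satisfies P(−a − b − x) = −P(x) for all real x; consequently x = −(a + b)/2 is a root of P, and there exists a polynomial Q with real coefficients of degree at most 2n such that P(x) = (x + (a + b)/2)·Q(x) for all real x and Q(x) = Q(−a − b − x) for all real x. -/
/-!
With `u = x + a` and `v = x + b`, the reflection `x ↦ -a - b - x` sends `(u, v)` to `(-v, -u)`,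
so `P` is odd under it because `2 * n + 1` is odd; its fixed point `-(a + b) / 2` is then a root.
Since `u ^ (2 * n + 1) + v ^ (2 * n + 1) = (u - (-v)) * ∑ u ^ i * (-v) ^ (2 * n - i)` and
`u + v = 2 * (x + (a + b) / 2)`, the quotient is
`Q = 2 * (∑ u ^ i * (-v) ^ (2 * n - i) + c)`. The reflection swaps `u` and `-v`, and the sum is
symmetric in these two arguments.
-/

theorem example4 (a b c : ℝ) (n : ℕ)
    (P : ℝ → ℝ)
    (hP : ∀ x : ℝ, P x =
      (x + a) ^ (2 * n + 1) + (x + b) ^ (2 * n + 1) + c * (2 * x + a + b)) :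
    (∀ x : ℝ, P (-a - b - x) = -P x) ∧
    P (-(a + b) / 2) = 0 ∧
    ∃ Q : Polynomial ℝ, Q.natDegree ≤ 2 * n ∧
      (∀ x : ℝ, P x = (x + (a + b) / 2) * Q.eval x) ∧
      (∀ x : ℝ, Q.eval x = Q.eval (-a - b - x)) := by
  have hodd : Odd (2 * n + 1) := ⟨n, rfl⟩
  have hanti : ∀ x : ℝ, P (-a - b - x) = -P x := by
    intro x
    rw [hP, hP, show -a - b - x + a = -(x + b) by ring, show -a - b - x + b = -(x + a) by ring,
      hodd.neg_pow, hodd.neg_pow]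
    ring
  refine ⟨hanti, ?_, ?_⟩
  · have h := hanti (-(a + b) / 2)
    rw [show -a - b - -(a + b) / 2 = -(a + b) / 2 by ring] at h
    linarith
  · let Q : Polynomial ℝ := Polynomial.C 2 * (∑ i ∈ Finset.range (2 * n + 1),
      (Polynomial.X + Polynomial.C a) ^ i * (-(Polynomial.X + Polynomial.C b)) ^ (2 * n - i)
        + Polynomial.C c)
    have hQ : ∀ x : ℝ, Q.eval x = 2 * (∑ i ∈ Finset.range (2 * n + 1),
        (x + a) ^ i * (-(x + b)) ^ (2 * n + 1 - 1 - i) + c) := by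
      intro x
      simp [Q, Polynomial.eval_finsetSum]
    refine ⟨Q, ?_, ?_, ?_⟩
    · refine (Polynomial.natDegree_C_mul_le _ _).trans
        (Polynomial.natDegree_add_le_of_degree_le ?_ (by simp))
      refine Polynomial.natDegree_sum_le_of_forall_le _ _ fun i hi => ?_
      have hi' : i + (2 * n - i) = 2 * n := by
        have := Finset.mem_range.mp hi
        omega
      have h1 := Polynomial.natDegree_pow_le (p := Polynomial.X + Polynomial.C a) (n := i)
      have h2 := Polynomial.natDegree_pow_le (p := -(Polynomial.X + Polynomial.C b))
        (n := 2 * n - i)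
      rw [Polynomial.natDegree_neg, Polynomial.natDegree_X_add_C] at h2
      rw [Polynomial.natDegree_X_add_C] at h1
      exact Polynomial.natDegree_mul_le.trans (by omega)
    · intro x
      have h := (Commute.all (x + a) (-(x + b))).geom_sum₂_mul (2 * n + 1)
      rw [hodd.neg_pow] at h
      rw [hP, hQ]
      linear_combination -h
    · intro x
      rw [hQ, hQ, show -a - b - x + a = -(x + b) by ring,
        show -(-a - b - x + b) = x + a by ring,
        (Commute.all (x + a) (-(x + b))).geom_sum₂_comm]
end
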